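/- For every holomorphic function φ on the open unit disc 𝔻 that is square-integrable, and every z ∈ 𝔻, the principal-value integral ∬_𝔻 conj(φ(w)) / (z − w)² d²w vanishes. -/

import Mathlib

open Filter MeasureTheory

/-!
Away from `z`, the function `conj φ(w) / (z - w)` is a primitive of `conj φ(w) / (z - w)²` for
`∂/∂w`, and remains one when an antiholomorphic function is subtracted from the factor
`1 / (z - w)`. Inside the circle `‖w - z‖ = ε`, this factor is continued antiholomorphically as
`conj (z - w) / ε²`. On a circle `‖w - c‖ = r` around `z`, it coincides with an antiholomorphic
function on the disc, obtained by reflecting `z` in the circle; subtracting that function makes the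
primitive vanish there. The outcome is a compactly supported Lipschitz function `u` with
`∂u/∂w = conj φ(w) / (z - w)²` between the two circles and `0` elsewhere, so `∫ ∂u/∂w = 0` says that
the truncated integral is exactly `0`. The full disc is exhausted by the discs of radius `r < R`.
-/

open Metric Set ComplexConjugate
open scoped NNReal Topology

section Lipschitz

theorem inter_frontier_nonempty_of_isPreconnected {X : Type*} [TopologicalSpace X] {s t : Set X}
    (ht : IsPreconnected t) (hts : (t ∩ s).Nonempty) (hts' : (t ∩ sᶜ).Nonempty) :
    (t ∩ frontier s).Nonempty := by
  by_contra! h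
  have hcover : t ⊆ interior s ∪ interior sᶜ := fun x hx ↦ by
    rw [← compl_frontier_eq_union_interior]
    exact fun hxs ↦ h.subset ⟨hx, hxs⟩
  have hs : (t ∩ interior s).Nonempty := hts.imp fun x hx ↦
    ⟨hx.1, (hcover hx.1).resolve_right fun hx' ↦ interior_subset hx' hx.2⟩
  have hs' : (t ∩ interior sᶜ).Nonempty := hts'.imp fun x hx ↦
    ⟨hx.1, (hcover hx.1).resolve_left fun hx' ↦ hx.2 (interior_subset hx')⟩
  obtain ⟨x, -, hx, hx'⟩ := ht _ _ isOpen_interior isOpen_interior hcover hs hs'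
  exact interior_subset hx' (interior_subset hx)

theorem lipschitzWith_piecewise {E F : Type*} [SeminormedAddCommGroup E] [NormedSpace ℝ E]
    [PseudoMetricSpace F] {K : ℝ≥0} {s : Set E} [∀ x, Decidable (x ∈ s)] {f g : E → F}
    (hf : LipschitzOnWith K f (closure s)) (hg : LipschitzOnWith K g (closure sᶜ))
    (hfg : EqOn f g (frontier s)) : LipschitzWith K (s.piecewise f g) := by
  have dist_le {x y : E} (hx : x ∈ s) (hy : y ∉ s) : dist (f x) (g y) ≤ K * dist x y := by
    obtain ⟨p, hpxy, hps⟩ := inter_frontier_nonempty_of_isPreconnected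
      (convex_segment (𝕜 := ℝ) x y).isPreconnected
      ⟨x, left_mem_segment ℝ x y, hx⟩ ⟨y, right_mem_segment ℝ x y, hy⟩
    have hfgp := hfg hps
    rw [frontier_eq_closure_inter_closure] at hps
    calc
      dist (f x) (g y) ≤ dist (f x) (f p) + dist (g p) (g y) := by
        rw [← hfgp]
        exact dist_triangle _ _ _
      _ ≤ K * dist x p + K * dist p y :=
        add_le_add (hf.dist_le_mul _ (subset_closure hx) _ hps.1)
          (hg.dist_le_mul _ hps.2 _ (subset_closure hy))
      _ = K * dist x y := by rw [← mul_add, dist_add_dist_of_mem_segment hpxy]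
  refine LipschitzWith.of_dist_le_mul fun x y ↦ ?_
  by_cases hx : x ∈ s <;> by_cases hy : y ∈ s <;>
    simp only [piecewise_eq_of_mem, piecewise_eq_of_notMem, hx, hy, not_false_eq_true]
  · exact hf.dist_le_mul _ (subset_closure hx) _ (subset_closure hy)
  · exact dist_le hx hy
  · rw [dist_comm, dist_comm x]
    exact dist_le hy hx
  · exact hg.dist_le_mul _ (subset_closure hx) _ (subset_closure hy)

theorem lipschitzOnWith_mul_of_norm_le {X A : Type*} [PseudoMetricSpace X] [SeminormedRing A]
    {s : Set X} {f g : X → A} {Kf Kg Cf Cg : ℝ≥0} (hf : LipschitzOnWith Kf f s)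
    (hg : LipschitzOnWith Kg g s) (hCf : ∀ x ∈ s, ‖f x‖ ≤ Cf) (hCg : ∀ x ∈ s, ‖g x‖ ≤ Cg) :
    LipschitzOnWith (Cf * Kg + Kf * Cg) (fun x ↦ f x * g x) s := by
  refine LipschitzOnWith.of_dist_le_mul fun x hx y hy ↦ ?_
  calc
    dist (f x * g x) (f y * g y) = ‖f x * (g x - g y) + (f x - f y) * g y‖ := by
      rw [dist_eq_norm]
      congr 1
      noncomm_ring
    _ ≤ ‖f x‖ * dist (g x) (g y) + dist (f x) (f y) * ‖g y‖ := by
      simp only [dist_eq_norm]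
      exact norm_add_le_of_le (norm_mul_le _ _) (norm_mul_le _ _)
    _ ≤ Cf * (Kg * dist x y) + Kf * dist x y * Cg := by
      gcongr
      exacts [hCf x hx, hg.dist_le_mul x hx y hy, hf.dist_le_mul x hx y hy, hCg y hy]
    _ = (Cf * Kg + Kf * Cg : ℝ≥0) * dist x y := by
      push_cast
      ring

theorem exists_lipschitzOnWith_mul_of_isCompact {X A : Type*} [PseudoMetricSpace X]
    [SeminormedRing A] {s : Set X} (hs : IsCompact s) {f g : X → A} {Kf Kg : ℝ≥0}
    (hf : LipschitzOnWith Kf f s) (hg : LipschitzOnWith Kg g s) :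
    ∃ K, LipschitzOnWith K (fun x ↦ f x * g x) s := by
  obtain ⟨Cf, hCf⟩ := hs.exists_bound_of_continuousOn hf.continuousOn
  obtain ⟨Cg, hCg⟩ := hs.exists_bound_of_continuousOn hg.continuousOn
  exact ⟨_, lipschitzOnWith_mul_of_norm_le hf hg
    (fun x hx ↦ (hCf x hx).trans (Real.le_coe_toNNReal Cf))
    (fun x hx ↦ (hCg x hx).trans (Real.le_coe_toNNReal Cg))⟩

theorem lipschitzOnWith_inv_compl_ball {𝕜 : Type*} [NormedDivisionRing 𝕜] {ε : ℝ≥0}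
    (hε : 0 < ε) : LipschitzOnWith (ε ^ 2)⁻¹ (fun x : 𝕜 ↦ x⁻¹) (ball 0 ε)ᶜ := by
  refine LipschitzOnWith.of_dist_le_mul fun x hx y hy ↦ ?_
  rw [mem_compl_iff, mem_ball_zero_iff, not_lt] at hx hy
  have hε' : (0 : ℝ) < ε := hε
  rw [dist_inv_inv₀ (norm_pos_iff.1 (hε'.trans_le hx)) (norm_pos_iff.1 (hε'.trans_le hy)),
    div_eq_inv_mul, NNReal.coe_inv, NNReal.coe_pow, sq]
  gcongr

theorem exists_lipschitzOnWith_conj {s : Set ℂ} {f : ℂ → ℂ} (hs : Convex ℝ s) (hsc : IsCompact s)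
    (hf : ContDiffOn ℂ 1 f s) : ∃ K, LipschitzOnWith K (fun w ↦ conj (f w)) s :=
  (Complex.conjCLE.contDiff.comp_contDiffOn (hf.restrict_scalars ℝ)).exists_lipschitzOnWith
    one_ne_zero hs hsc

end Lipschitz

section IntegralFDeriv

variable {E F : Type*} [NormedAddCommGroup E] [NormedSpace ℝ E] [MeasurableSpace E] [BorelSpace E]
  [NormedAddCommGroup F] [NormedSpace ℝ F] [FiniteDimensional ℝ F]
  {μ : Measure E} {K : ℝ≥0} {f : E → F}

theorem integrable_fderiv_apply_of_lipschitzWith [IsFiniteMeasureOnCompacts μ]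
    (hf : LipschitzWith K f) (hfc : HasCompactSupport f) (v : E) :
    Integrable (fun x ↦ fderiv ℝ f x v) μ := by
  borelize F
  have : CompleteSpace F := FiniteDimensional.complete ℝ F
  have : ProperSpace F := FiniteDimensional.proper ℝ F
  have hsupp : Function.support (fun x ↦ fderiv ℝ f x v) ⊆ tsupport f :=
    (subset_tsupport _).trans (tsupport_fderiv_apply_subset ℝ v)
  rw [← integrableOn_iff_integrable_of_support_subset hsupp]
  refine IntegrableOn.of_bound hfc.measure_lt_top
    (measurable_fderiv_apply_const ℝ f v).aestronglyMeasurable (K * ‖v‖) (.of_forall fun x ↦ ?_)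
  exact (fderiv ℝ f x).le_of_opNorm_le (norm_fderiv_le_of_lipschitz ℝ hf) v

variable [FiniteDimensional ℝ E] [μ.IsAddHaarMeasure]

theorem integral_lineDeriv_eq_zero_of_lipschitzWith {f : E → ℝ} (hf : LipschitzWith K f)
    (hfc : HasCompactSupport f) (v : E) : ∫ x, lineDeriv ℝ f x v ∂μ = 0 := by
  have hconst (x : E) : lineDeriv ℝ (fun _ ↦ (1 : ℝ)) x (-v) = 0 := by
    simp only [lineDeriv, deriv_const]
  simpa only [hconst, zero_mul, integral_zero, mul_one, neg_neg] using
    ((LipschitzWith.const (1 : ℝ)).integral_lineDeriv_mul_eq (μ := μ) hf hfc (-v)).symm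

theorem integral_fderiv_apply_eq_zero_of_lipschitzWith
    (hf : LipschitzWith K f) (hfc : HasCompactSupport f) (v : E) :
    ∫ x, fderiv ℝ f x v ∂μ = 0 := by
  have : CompleteSpace F := FiniteDimensional.complete ℝ F
  refine SeparatingDual.eq_zero_of_forall_dual_eq_zero (R := ℝ) fun ℓ ↦ ?_
  calc
    ℓ (∫ x, fderiv ℝ f x v ∂μ) = ∫ x, ℓ (fderiv ℝ f x v) ∂μ :=
      (ℓ.integral_comp_comm (integrable_fderiv_apply_of_lipschitzWith hf hfc v)).symm
    _ = ∫ x, lineDeriv ℝ (ℓ ∘ f) x v ∂μ := by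
      refine integral_congr_ae ?_
      filter_upwards [hf.ae_differentiableAt] with x hx
      exact ((ℓ.hasFDerivAt.comp x hx.hasFDerivAt).hasLineDerivAt v).lineDeriv.symm
    _ = 0 := integral_lineDeriv_eq_zero_of_lipschitzWith (ℓ.lipschitz.comp hf)
      (hfc.comp_left (map_zero ℓ)) v

end IntegralFDeriv

section SetIntegral

theorem tendsto_setIntegral_ball {X E : Type*} [PseudoMetricSpace X] [MeasurableSpace X]
    [OpensMeasurableSpace X] [NormedAddCommGroup E] [NormedSpace ℝ E] {μ : Measure X} {f : X → E}
    {x : X} {R : ℝ} (hf : IntegrableOn f (ball x R) μ) :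
    Tendsto (fun r ↦ ∫ y in ball x r, f y ∂μ) (𝓝[<] R) (𝓝 (∫ y in ball x R, f y ∂μ)) := by
  have hcover : AECover (μ.restrict (ball x R)) (𝓝[<] R) (ball x) :=
    { ae_eventually_mem := by
        filter_upwards [ae_restrict_mem measurableSet_ball] with y hy
        exact mem_of_superset (Ioo_mem_nhdsLT hy) fun r hr ↦ hr.1
      measurableSet := fun _ ↦ measurableSet_ball }
  refine (hcover.integral_tendsto_of_countably_generated hf).congr' ?_
  filter_upwards [self_mem_nhdsWithin] with r hr
  rw [Measure.restrict_restrict measurableSet_ball,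
    inter_eq_left.2 (ball_subset_ball (le_of_lt hr))]

theorem integrableOn_of_integrableOn_norm_sq {X E : Type*} [MeasurableSpace X]
    [NormedAddCommGroup E] {μ : Measure X} {s : Set X} {f : X → E}
    (hf : AEStronglyMeasurable f (μ.restrict s)) (hs : μ s ≠ ⊤)
    (hf2 : IntegrableOn (fun x ↦ ‖f x‖ ^ 2) s μ) : IntegrableOn f s μ := by
  have : IsFiniteMeasure (μ.restrict s) := isFiniteMeasure_restrict.2 hs
  exact ((memLp_two_iff_integrable_sq_norm hf).2 hf2).integrable one_le_two

end SetIntegral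

section WirtingerDeriv

/-- The Wirtinger derivative `∂f/∂w = (∂f/∂x - i ∂f/∂y) / 2` of a function of one complex variable
`w = x + iy`. As with `fderiv`, its value is `0` where `f` is not real differentiable. -/
noncomputable def wirtingerDeriv (f : ℂ → ℂ) (w : ℂ) : ℂ :=
  (fderiv ℝ f w 1 - Complex.I * fderiv ℝ f w Complex.I) / 2

variable {f g : ℂ → ℂ} {w : ℂ}

theorem wirtingerDeriv_congr (h : f =ᶠ[𝓝 w] g) : wirtingerDeriv f w = wirtingerDeriv g w := by
  simp only [wirtingerDeriv, h.fderiv_eq]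

theorem wirtingerDeriv_eq_deriv (hf : DifferentiableAt ℂ f w) :
    wirtingerDeriv f w = deriv f w := by
  have hf' : HasFDerivAt f _ w := hf.hasDerivAt.hasFDerivAt.restrictScalars ℝ
  simp only [wirtingerDeriv, hf'.fderiv, ContinuousLinearMap.coe_restrictScalars',
    ContinuousLinearMap.toSpanSingleton_apply, smul_eq_mul]
  linear_combination -deriv f w / 2 * Complex.I_mul_I

theorem wirtingerDeriv_conj (hf : DifferentiableAt ℂ f w) :
    wirtingerDeriv (fun x ↦ conj (f x)) w = 0 := by
  have hf' : HasFDerivAt (fun x ↦ conj (f x)) _ w :=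
    Complex.conjCLE.hasFDerivAt.comp w (hf.hasDerivAt.hasFDerivAt.restrictScalars ℝ)
  simp only [wirtingerDeriv, hf'.fderiv, ContinuousLinearMap.comp_apply,
    ContinuousLinearMap.coe_restrictScalars', ContinuousLinearMap.toSpanSingleton_apply,
    ContinuousLinearEquiv.coe_coe, Complex.conjCLE_apply, smul_eq_mul, map_mul, Complex.conj_I,
    map_one]
  linear_combination conj (deriv f w) / 2 * Complex.I_mul_I

theorem wirtingerDeriv_sub (hf : DifferentiableAt ℝ f w) (hg : DifferentiableAt ℝ g w) :
    wirtingerDeriv (fun x ↦ f x - g x) w = wirtingerDeriv f w - wirtingerDeriv g w := by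
  simp only [wirtingerDeriv, fderiv_fun_sub hf hg, sub_apply]
  ring

theorem wirtingerDeriv_mul (hf : DifferentiableAt ℝ f w) (hg : DifferentiableAt ℝ g w) :
    wirtingerDeriv (fun x ↦ f x * g x) w =
      f w * wirtingerDeriv g w + wirtingerDeriv f w * g w := by
  simp only [wirtingerDeriv, fderiv_fun_mul hf hg, add_apply, smul_apply, smul_eq_mul]
  ring

theorem differentiableAt_real_conj (hf : DifferentiableAt ℂ f w) :
    DifferentiableAt ℝ (fun x ↦ conj (f x)) w :=
  Complex.conjCLE.differentiableAt.comp w (hf.restrictScalars ℝ)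

theorem wirtingerDeriv_conj_mul (hf : DifferentiableAt ℂ f w) (hg : DifferentiableAt ℝ g w) :
    wirtingerDeriv (fun x ↦ conj (f x) * g x) w = conj (f w) * wirtingerDeriv g w := by
  rw [wirtingerDeriv_mul (differentiableAt_real_conj hf) hg, wirtingerDeriv_conj hf, zero_mul,
    add_zero]

theorem integral_wirtingerDeriv_eq_zero {K : ℝ≥0} (hf : LipschitzWith K f)
    (hfc : HasCompactSupport f) : ∫ w, wirtingerDeriv f w = 0 := by
  simp only [wirtingerDeriv]
  rw [integral_div, integral_sub (integrable_fderiv_apply_of_lipschitzWith hf hfc _)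
    ((integrable_fderiv_apply_of_lipschitzWith hf hfc _).const_mul _), integral_const_mul]
  simp only [integral_fderiv_apply_eq_zero_of_lipschitzWith hf hfc, mul_zero, sub_zero, zero_div]

end WirtingerDeriv

section TruncatedInv

open Classical in
/-- The function `1/ζ` outside the ball of radius `ε`, continued across the circle `‖ζ‖ = ε` by
the antiholomorphic function `conj ζ / ε²`. -/
noncomputable def truncatedInv (ε : ℝ) : ℂ → ℂ :=
  (ball 0 ε).piecewise (fun ζ ↦ conj (ζ / ε ^ 2)) (fun ζ ↦ ζ⁻¹)

variable {ε : ℝ} {z w ζ : ℂ}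

theorem truncatedInv_of_norm_lt (h : ‖ζ‖ < ε) : truncatedInv ε ζ = conj (ζ / ε ^ 2) :=
  if_pos (mem_ball_zero_iff.2 h)

theorem truncatedInv_of_le_norm (h : ε ≤ ‖ζ‖) : truncatedInv ε ζ = ζ⁻¹ :=
  if_neg (by simpa using h)

theorem exists_lipschitzWith_truncatedInv (hε : 0 < ε) : ∃ K, LipschitzWith K (truncatedInv ε) := by
  classical
  lift ε to ℝ≥0 using hε.le
  refine ⟨(ε ^ 2)⁻¹, lipschitzWith_piecewise (LipschitzOnWith.of_dist_le_mul fun x _ y _ ↦ ?_) ?_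
    fun ζ hζ ↦ ?_⟩
  · rw [dist_eq_norm, ← map_sub, ← sub_div, RCLike.norm_conj, norm_div, dist_eq_norm,
      div_eq_inv_mul]
    simp
  · rw [isOpen_ball.isClosed_compl.closure_eq]
    exact lipschitzOnWith_inv_compl_ball hε
  · rw [frontier_ball _ hε.ne', mem_sphere_zero_iff_norm] at hζ
    simp only [map_div₀, Complex.inv_def, ← Complex.sq_norm, hζ]
    simp [div_eq_mul_inv]

theorem truncatedInv_sub_eventuallyEq_of_dist_lt (h : dist w z < ε) :
    (fun w ↦ truncatedInv ε (z - w)) =ᶠ[𝓝 w] fun w ↦ conj ((z - w) / ε ^ 2) := by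
  filter_upwards [isOpen_ball.mem_nhds h] with x hx
  exact truncatedInv_of_norm_lt (by simpa only [mem_ball', dist_eq_norm] using hx)

theorem truncatedInv_sub_eventuallyEq_of_lt_dist (h : ε < dist w z) :
    (fun w ↦ truncatedInv ε (z - w)) =ᶠ[𝓝 w] fun w ↦ (z - w)⁻¹ := by
  filter_upwards [isClosed_closedBall.isOpen_compl.mem_nhds (by simpa using h)] with x hx
  rw [mem_compl_iff, mem_closedBall', not_le, dist_eq_norm] at hx
  exact truncatedInv_of_le_norm hx.le

theorem wirtingerDeriv_truncatedInv_sub_of_dist_lt (h : dist w z < ε) :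
    wirtingerDeriv (fun w ↦ truncatedInv ε (z - w)) w = 0 := by
  rw [wirtingerDeriv_congr (truncatedInv_sub_eventuallyEq_of_dist_lt h)]
  exact wirtingerDeriv_conj (by fun_prop)

theorem wirtingerDeriv_truncatedInv_sub_of_lt_dist (hε : 0 ≤ ε) (h : ε < dist w z) :
    wirtingerDeriv (fun w ↦ truncatedInv ε (z - w)) w = 1 / (z - w) ^ 2 := by
  have hzw : z - w ≠ 0 := sub_ne_zero.2 (dist_pos.1 (hε.trans_lt h)).symm
  have hderiv : HasDerivAt (fun w ↦ (z - w)⁻¹) (1 / (z - w) ^ 2) w := by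
    simpa using ((hasDerivAt_id w).const_sub z).fun_inv hzw
  rw [wirtingerDeriv_congr (truncatedInv_sub_eventuallyEq_of_lt_dist h),
    wirtingerDeriv_eq_deriv hderiv.differentiableAt, hderiv.deriv]

theorem differentiableAt_truncatedInv_sub (hε : 0 ≤ ε) (h : dist w z ≠ ε) :
    DifferentiableAt ℝ (fun w ↦ truncatedInv ε (z - w)) w := by
  rcases h.lt_or_gt with h | h
  · exact (differentiableAt_real_conj (by fun_prop)).congr_of_eventuallyEq
      (truncatedInv_sub_eventuallyEq_of_dist_lt h)
  · have hzw : z - w ≠ 0 := sub_ne_zero.2 (dist_pos.1 (hε.trans_lt h)).symm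
    have hinv : DifferentiableAt ℝ (fun w ↦ (z - w)⁻¹) w := by fun_prop (disch := assumption)
    exact hinv.congr_of_eventuallyEq (truncatedInv_sub_eventuallyEq_of_lt_dist h)

end TruncatedInv

section ReflectedInv

/-- On the circle `‖w - c‖ = r` the function `1/(z - w)` coincides with the complex conjugate of
this function of `w`, which is holomorphic in the disc bounded by that circle when `z` lies in the
disc: its only pole is the reflection of `z` in the circle. -/
noncomputable def reflectedInv (c : ℂ) (r : ℝ) (z w : ℂ) : ℂ :=
  (w - c) / (conj (z - c) * (w - c) - r ^ 2)

variable {c z w : ℂ} {r : ℝ}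

theorem conj_reflectedInv_of_mem_sphere (hr : r ≠ 0) (hw : w ∈ sphere c r) :
    conj (reflectedInv c r z w) = (z - w)⁻¹ := by
  have hwc : conj (w - c) ≠ 0 := by
    rw [map_ne_zero, sub_ne_zero]
    exact ne_of_mem_sphere hw hr
  have hr2 : (w - c) * conj (w - c) = r ^ 2 := by
    rw [Complex.mul_conj', mem_sphere_iff_norm.1 hw]
  have hden : (z - c) * conj (w - c) - r ^ 2 = conj (w - c) * (z - w) := by
    rw [← hr2]
    ring
  simp only [reflectedInv, map_div₀, map_sub conj (_ * _), map_mul, Complex.conj_conj, map_pow,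
    Complex.conj_ofReal, hden, div_mul_cancel_left₀ hwc]

theorem reflectedInv_denom_ne_zero (hz : z ∈ ball c r) (hw : w ∈ closedBall c r) :
    conj (z - c) * (w - c) - r ^ 2 ≠ 0 := by
  rw [mem_ball_iff_norm] at hz
  rw [mem_closedBall_iff_norm] at hw
  have hr : 0 < r := (norm_nonneg _).trans_lt hz
  refine sub_ne_zero.2 fun h ↦ (?_ : ‖conj (z - c) * (w - c)‖ < r ^ 2).ne ?_
  · rw [norm_mul, RCLike.norm_conj, sq]
    exact (mul_le_mul_of_nonneg_left hw (norm_nonneg _)).trans_lt (mul_lt_mul_of_pos_right hz hr)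
  · rw [h, norm_pow, Complex.norm_real, Real.norm_of_nonneg hr.le]

theorem contDiffOn_reflectedInv (hz : z ∈ ball c r) {n : WithTop ℕ∞} :
    ContDiffOn ℂ n (reflectedInv c r z) (closedBall c r) :=
  ContDiffOn.div (by fun_prop) (by fun_prop) fun _ ↦ reflectedInv_denom_ne_zero hz

end ReflectedInv

section TruncatedPrimitive

open Classical in
/-- A compactly supported primitive, for the Wirtinger derivative, of `conj φ(w) / (z - w)²` cut off
to the disc of center `c` and radius `r` minus the disc of center `z` and radius `ε`. Subtracting
the conjugate of `reflectedInv`, which the Wirtinger derivative does not see, makes it vanish on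
the boundary circle, so the extension by `0` is Lipschitz when `φ` is regular up to the boundary. -/
noncomputable def truncatedPrimitive (φ : ℂ → ℂ) (c : ℂ) (r : ℝ) (z : ℂ) (ε : ℝ) : ℂ → ℂ :=
  (ball c r).piecewise
    (fun w ↦ conj (φ w) * (truncatedInv ε (z - w) - conj (reflectedInv c r z w))) (fun _ ↦ 0)

variable {φ : ℂ → ℂ} {c z w : ℂ} {r ε : ℝ}

theorem truncatedPrimitive_of_mem_ball (hw : w ∈ ball c r) :
    truncatedPrimitive φ c r z ε w =
      conj (φ w) * (truncatedInv ε (z - w) - conj (reflectedInv c r z w)) :=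
  if_pos hw

theorem truncatedPrimitive_of_notMem_ball (hw : w ∉ ball c r) :
    truncatedPrimitive φ c r z ε w = 0 :=
  if_neg hw

theorem hasCompactSupport_truncatedPrimitive :
    HasCompactSupport (truncatedPrimitive φ c r z ε) :=
  .intro (isCompact_closedBall c r) fun _ hw ↦
    truncatedPrimitive_of_notMem_ball fun hw' ↦ hw (ball_subset_closedBall hw')

theorem truncatedInv_sub_eq_conj_reflectedInv (hε : 0 < ε) (hzε : ball z ε ⊆ ball c r)
    (hw : w ∈ sphere c r) : truncatedInv ε (z - w) = conj (reflectedInv c r z w) := by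
  have hr : r ≠ 0 := (pos_of_mem_ball (hzε (mem_ball_self hε))).ne'
  have hεw : ε ≤ ‖z - w‖ := by
    have hwz : w ∉ ball z ε := fun h ↦ (mem_ball.1 (hzε h)).ne hw
    simpa [dist_eq_norm'] using hwz
  rw [truncatedInv_of_le_norm hεw, conj_reflectedInv_of_mem_sphere hr hw]

theorem exists_lipschitzWith_truncatedPrimitive (hε : 0 < ε) (hzε : ball z ε ⊆ ball c r)
    (hφ : ContDiffOn ℂ 1 φ (closedBall c r)) :
    ∃ K, LipschitzWith K (truncatedPrimitive φ c r z ε) := by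
  classical
  have hz : z ∈ ball c r := hzε (mem_ball_self hε)
  have hr : r ≠ 0 := (pos_of_mem_ball hz).ne'
  have hconv := convex_closedBall c r
  have hcomp := isCompact_closedBall c r
  obtain ⟨Kφ, hKφ⟩ := exists_lipschitzOnWith_conj hconv hcomp hφ
  obtain ⟨Kh, hKh⟩ := exists_lipschitzOnWith_conj hconv hcomp (contDiffOn_reflectedInv hz)
  obtain ⟨Kt, hKt⟩ := exists_lipschitzWith_truncatedInv hε
  have hKt' := (hKt.comp ((LipschitzWith.const z).sub LipschitzWith.id)).lipschitzOnWith
    (s := closedBall c r)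
  obtain ⟨K, hK⟩ := exists_lipschitzOnWith_mul_of_isCompact hcomp hKφ (hKt'.sub hKh)
  refine ⟨K, lipschitzWith_piecewise ?_ ((LipschitzWith.const 0).weaken zero_le).lipschitzOnWith
    fun w hw ↦ ?_⟩
  · rw [closure_ball c hr]
    exact hK
  · rw [frontier_ball c hr] at hw
    simp only [truncatedInv_sub_eq_conj_reflectedInv hε hzε hw, sub_self, mul_zero]

theorem wirtingerDeriv_truncatedPrimitive_of_mem_ball (hε : 0 ≤ ε) (hz : z ∈ ball c r)
    (hφ : DifferentiableAt ℂ φ w) (hw : w ∈ ball c r) (hwε : w ∉ sphere z ε) :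
    wirtingerDeriv (truncatedPrimitive φ c r z ε) w =
      conj (φ w) * wirtingerDeriv (fun w ↦ truncatedInv ε (z - w)) w := by
  have hrefl : DifferentiableAt ℂ (reflectedInv c r z) w :=
    ((contDiffOn_reflectedInv hz).contDiffAt (closedBall_mem_nhds_of_mem hw)).differentiableAt
      one_ne_zero
  have htrunc : DifferentiableAt ℝ (fun w ↦ truncatedInv ε (z - w)) w :=
    differentiableAt_truncatedInv_sub hε hwε
  have heq : truncatedPrimitive φ c r z ε =ᶠ[𝓝 w]
      fun w ↦ conj (φ w) * (truncatedInv ε (z - w) - conj (reflectedInv c r z w)) :=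
    (isOpen_ball.eventually_mem hw).mono fun _ ↦ truncatedPrimitive_of_mem_ball
  rw [wirtingerDeriv_congr heq,
    wirtingerDeriv_conj_mul hφ (htrunc.fun_sub (differentiableAt_real_conj hrefl)),
    wirtingerDeriv_sub htrunc (differentiableAt_real_conj hrefl), wirtingerDeriv_conj hrefl,
    sub_zero]

theorem wirtingerDeriv_truncatedPrimitive_of_notMem_closedBall (hw : w ∉ closedBall c r) :
    wirtingerDeriv (truncatedPrimitive φ c r z ε) w = 0 := by
  have heq : truncatedPrimitive φ c r z ε =ᶠ[𝓝 w] fun _ ↦ 0 :=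
    (isClosed_closedBall.isOpen_compl.eventually_mem hw).mono fun _ hx ↦
      truncatedPrimitive_of_notMem_ball fun hx' ↦ hx (ball_subset_closedBall hx')
  rw [wirtingerDeriv_congr heq, wirtingerDeriv_eq_deriv (differentiableAt_const _), deriv_const]

theorem wirtingerDeriv_truncatedPrimitive_ae_eq (hε : 0 ≤ ε) (hz : z ∈ ball c r)
    (hφ : DifferentiableOn ℂ φ (ball c r)) :
    wirtingerDeriv (truncatedPrimitive φ c r z ε) =ᵐ[volume]
      (ball c r \ ball z ε).indicator fun w ↦ conj (φ w) / (z - w) ^ 2 := by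
  have hsphere (x : ℂ) (ρ : ℝ) : ∀ᵐ w : ℂ, w ∉ sphere x ρ :=
    measure_eq_zero_iff_ae_notMem.1 (Measure.addHaar_sphere volume x ρ)
  filter_upwards [hsphere c r, hsphere z ε] with w hwr hwε
  by_cases hw : w ∈ ball c r
  · rw [wirtingerDeriv_truncatedPrimitive_of_mem_ball hε hz
      (hφ.differentiableAt (isOpen_ball.mem_nhds hw)) hw hwε]
    rcases lt_or_gt_of_ne hwε with h | h
    · rw [wirtingerDeriv_truncatedInv_sub_of_dist_lt h, mul_zero,
        indicator_of_notMem fun h' ↦ h'.2 h]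
    · rw [wirtingerDeriv_truncatedInv_sub_of_lt_dist hε h, mul_one_div,
        indicator_of_mem (show w ∈ ball c r \ ball z ε from ⟨hw, h.not_gt⟩)]
  · have hw' : w ∉ closedBall c r := fun h ↦ (h.lt_or_eq).elim hw hwr
    rw [wirtingerDeriv_truncatedPrimitive_of_notMem_closedBall hw',
      indicator_of_notMem fun h ↦ hw h.1]

end TruncatedPrimitive

section TruncatedIntegral

variable {φ : ℂ → ℂ} {c z : ℂ} {r R ε : ℝ}

theorem setIntegral_conj_div_sq_eq_zero_of_contDiffOn (hε : 0 < ε) (hzε : ball z ε ⊆ ball c r)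
    (hφ : ContDiffOn ℂ 1 φ (closedBall c r)) :
    ∫ w in ball c r \ ball z ε, conj (φ w) / (z - w) ^ 2 = 0 := by
  obtain ⟨K, hK⟩ := exists_lipschitzWith_truncatedPrimitive hε hzε hφ
  have hφ' : DifferentiableOn ℂ φ (ball c r) :=
    (hφ.differentiableOn one_ne_zero).mono ball_subset_closedBall
  rw [← integral_indicator (measurableSet_ball.diff measurableSet_ball),
    ← integral_congr_ae
      (wirtingerDeriv_truncatedPrimitive_ae_eq hε.le (hzε (mem_ball_self hε)) hφ'),
    integral_wirtingerDeriv_eq_zero hK hasCompactSupport_truncatedPrimitive]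

theorem integrableOn_conj_div_sq {s : Set ℂ} (hε : 0 < ε) (hs : MeasurableSet s)
    (hφ : IntegrableOn φ s) :
    IntegrableOn (fun w ↦ conj (φ w) / (z - w) ^ 2) (s \ ball z ε) := by
  have hconj : IntegrableOn (fun w ↦ conj (φ w)) (s \ ball z ε) :=
    Complex.conjCLE.toContinuousLinearMap.integrable_comp (hφ.mono_set sdiff_subset)
  simp only [div_eq_mul_inv]
  refine hconj.mul_bdd (c := (ε ^ 2)⁻¹) (by fun_prop) ?_
  filter_upwards [ae_restrict_mem (hs.diff measurableSet_ball)] with w hw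
  have hεw : ε ≤ ‖z - w‖ := by simpa [dist_eq_norm'] using hw.2
  rw [norm_inv, norm_pow]
  gcongr

theorem setIntegral_conj_div_sq_eq_zero (hε : 0 < ε) (hzε : closedBall z ε ⊆ ball c R)
    (hφ : DifferentiableOn ℂ φ (ball c R)) (hφi : IntegrableOn φ (ball c R)) :
    ∫ w in ball c R \ ball z ε, conj (φ w) / (z - w) ^ 2 = 0 := by
  obtain ⟨r₀, hr₀, hzr₀⟩ := exists_lt_subset_ball isClosed_closedBall hzε
  have hlim : Tendsto (fun r ↦ ∫ w in ball c r \ ball z ε, conj (φ w) / (z - w) ^ 2) (𝓝[<] R)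
      (𝓝 (∫ w in ball c R \ ball z ε, conj (φ w) / (z - w) ^ 2)) := by
    have hint := integrableOn_conj_div_sq (z := z) hε measurableSet_ball hφi
    simp only [sdiff_eq, ← Measure.restrict_restrict measurableSet_ball] at hint ⊢
    rw [IntegrableOn, ← Measure.restrict_restrict measurableSet_ball] at hint
    exact tendsto_setIntegral_ball hint
  refine tendsto_nhds_unique hlim (tendsto_const_nhds.congr' ?_)
  filter_upwards [Ioo_mem_nhdsLT hr₀] with r hr
  refine (setIntegral_conj_div_sq_eq_zero_of_contDiffOn hε
    (ball_subset_closedBall.trans (hzr₀.trans (ball_subset_ball hr.1.le))) ?_).symm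
  exact (hφ.contDiffOn isOpen_ball).mono (closedBall_subset_ball hr.2)

end TruncatedIntegral

theorem stmt1_general {φ : ℂ → ℂ} {c z : ℂ} {R : ℝ} (hφ : DifferentiableOn ℂ φ (ball c R))
    (hφi : IntegrableOn φ (ball c R)) (hz : z ∈ ball c R) :
    Tendsto (fun ε ↦ ∫ w in ball c R \ ball z ε, conj (φ w) / (z - w) ^ 2) (𝓝[>] 0) (𝓝 0) := by
  obtain ⟨δ, hδ, hzδ⟩ := nhds_basis_closedBall.mem_iff.1 (isOpen_ball.mem_nhds hz)
  refine tendsto_const_nhds.congr' ?_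
  filter_upwards [Ioo_mem_nhdsGT hδ] with ε hε
  exact (setIntegral_conj_div_sq_eq_zero hε.1
    ((closedBall_subset_closedBall hε.2.le).trans hzδ) hφ hφi).symm

theorem stmt1 (φ : ℂ → ℂ)
    (hφ : DifferentiableOn ℂ φ (Metric.ball (0 : ℂ) 1))
    (hL2 : IntegrableOn (fun w => ‖φ w‖ ^ 2) (Metric.ball (0 : ℂ) 1) volume)
    (z : ℂ) (hz : z ∈ Metric.ball (0 : ℂ) 1) :
    Tendsto (fun ε : ℝ =>
        ∫ w in Metric.ball (0 : ℂ) 1 \ Metric.ball z ε,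
          (starRingEnd ℂ) (φ w) / (z - w) ^ 2)
      (nhdsWithin 0 (Set.Ioi 0)) (nhds 0) :=
  stmt1_general hφ (integrableOn_of_integrableOn_norm_sq
    (hφ.continuousOn.aestronglyMeasurable measurableSet_ball) measure_ball_lt_top.ne hL2) hz
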